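/- arXiv:1912.07528 — 2 statements merged into one kernel-verified Lean document; each statement's English description precedes it below -/
import Mathlib

section
/- Let a ∈ {1,...,K−1} and suppose ρ > 0 and q_a ≤ 1 < q_{a+1}. Then the LP objective at the intersection point p(a,a+1) is at least its value at the corner point (1/q_{a+1})·e_{a+1}, i.e., f(p(a,a+1)) ≥ ((a+1)/(a+2))·(1/q_{a+1}), if and only if α ≥ σ_a, where σ_a = 1 + log((a+1)/(a+2))/log((a+1)/a). -/
/-- Transmission cost per placement of a type-`t` subfile: `c_t = ρ·t^α`. -/
noncomputable def cCost (ρ α : ℝ) (t : ℕ) : ℝ := ρ * (t : ℝ) ^ α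

/-- `q_t = (N·c_t·(t+1) + t·(K+1)) / (K·(t+1))`. -/
noncomputable def q (K N : ℕ) (ρ α : ℝ) (t : ℕ) : ℝ :=
  ((N : ℝ) * cCost ρ α t * ((t : ℝ) + 1) + (t : ℝ) * ((K : ℝ) + 1)) /
    ((K : ℝ) * ((t : ℝ) + 1))

/-- Feasibility for the caching LP: `Σ_{t=1}^K q_t·y_t ≤ 1`, `Σ_{t=1}^K y_t ≤ 1`,
and `y_t ≥ 0` for all `t ∈ {1,…,K}`. -/
def Feasible (K N : ℕ) (ρ α : ℝ) (y : ℕ → ℝ) : Prop :=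
  (∑ t ∈ Finset.Icc 1 K, q K N ρ α t * y t ≤ 1) ∧
  (∑ t ∈ Finset.Icc 1 K, y t ≤ 1) ∧
  (∀ t ∈ Finset.Icc 1 K, 0 ≤ y t)

/-- The caching LP objective `f(y) = Σ_{t=1}^K (t/(t+1))·y_t`. -/
noncomputable def objF (K : ℕ) (y : ℕ → ℝ) : ℝ :=
  ∑ t ∈ Finset.Icc 1 K, ((t : ℝ) / ((t : ℝ) + 1)) * y t

/-- The intersection point `p(i,j)`: `y_i = (q_j − 1)/(q_j − q_i)`,
`y_j = (1 − q_i)/(q_j − q_i)`, and `y_t = 0` otherwise. -/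
noncomputable def pInter (K N : ℕ) (ρ α : ℝ) (i j : ℕ) : ℕ → ℝ := fun t =>
  if t = i then (q K N ρ α j - 1) / (q K N ρ α j - q K N ρ α i)
  else if t = j then (1 - q K N ρ α i) / (q K N ρ α j - q K N ρ α i)
  else 0

/-- `σ_t = 1 + log((t+1)/(t+2)) / log((t+1)/t)`. -/
noncomputable def sigma (t : ℕ) : ℝ :=
  1 + Real.log (((t : ℝ) + 1) / ((t : ℝ) + 2)) / Real.log (((t : ℝ) + 1) / (t : ℝ))

theorem q_eq_add {K : ℕ} (hK : 0 < K) (N : ℕ) (ρ α : ℝ) (t : ℕ) :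
    q K N ρ α t =
      (N : ℝ) / K * (ρ * (t : ℝ) ^ α) + (t : ℝ) / ((t : ℝ) + 1) * (((K : ℝ) + 1) / K) := by
  have hK' : (K : ℝ) ≠ 0 := by positivity
  have ht : (t : ℝ) + 1 ≠ 0 := by positivity
  unfold q cCost
  field_simp

/-- The objective at `p(i,j)` only sees the two coordinates `i` and `j`. -/
theorem objF_pInter (K N : ℕ) (ρ α : ℝ) {i j : ℕ} (hij : i ≠ j)
    (hi : i ∈ Finset.Icc 1 K) (hj : j ∈ Finset.Icc 1 K) :
    objF K (pInter K N ρ α i j) =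
      (i : ℝ) / ((i : ℝ) + 1) * ((q K N ρ α j - 1) / (q K N ρ α j - q K N ρ α i)) +
      (j : ℝ) / ((j : ℝ) + 1) * ((1 - q K N ρ α i) / (q K N ρ α j - q K N ρ α i)) := by
  unfold objF
  rw [Finset.sum_eq_add_of_mem i j hi hj hij]
  · simp [pInter, hij.symm]
  · rintro t - ⟨hti, htj⟩
    simp [pInter, hti, htj]

/-- Comparison of a corner with the point where both constraints are tight. -/
theorem corner_le_intersection_iff {u v x y : ℝ} (hx : x ≤ 1) (hy : 1 < y) :
    v * (1 / y) ≤ u * ((y - 1) / (y - x)) + v * ((1 - x) / (y - x)) ↔ v * x ≤ u * y := by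
  have hy0 : 0 < y := by linarith
  have hyx : 0 < y - x := by linarith
  have hy1 : 0 < y - 1 := by linarith
  have key : u * ((y - 1) / (y - x)) + v * ((1 - x) / (y - x)) - v * (1 / y) =
      (y - 1) / (y * (y - x)) * (u * y - v * x) := by
    field_simp
    ring
  rw [← sub_nonneg, key, mul_nonneg_iff_of_pos_left (by positivity), sub_nonneg]

/-- The threshold `σ_t` is where `t/(t+1)·(t+1)^α` overtakes `(t+1)/(t+2)·t^α`. -/
theorem sigma_le_iff {t : ℕ} (ht : 1 ≤ t) (α : ℝ) :
    sigma t ≤ α ↔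
      ((t : ℝ) + 1) / ((t : ℝ) + 2) * (t : ℝ) ^ α ≤
        (t : ℝ) / ((t : ℝ) + 1) * ((t : ℝ) + 1) ^ α := by
  have ht0 : (0 : ℝ) < t := by exact_mod_cast ht
  have hlog : 0 < Real.log (((t : ℝ) + 1) / t) :=
    Real.log_pos ((one_lt_div ht0).2 (by linarith))
  have hsig : sigma t ≤ α ↔ Real.log (((t : ℝ) + 1) / ((t : ℝ) + 2)) ≤
      (α - 1) * Real.log (((t : ℝ) + 1) / t) := by
    rw [sigma, ← le_sub_iff_add_le', div_le_iff₀ hlog]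
  rw [hsig, ← Real.log_le_log_iff (x := ((t : ℝ) + 1) / ((t : ℝ) + 2) * (t : ℝ) ^ α)
      (by positivity) (by positivity),
    Real.log_mul (by positivity) (by positivity), Real.log_mul (by positivity) (by positivity),
    Real.log_rpow ht0, Real.log_rpow (by positivity),
    Real.log_div (x := (t : ℝ)) (by positivity) (by positivity),
    Real.log_div (y := (t : ℝ)) (by positivity) (by positivity)]
  constructor <;> intro h <;> linarith

theorem intersection_vs_corner_iff_sigma
    (K N : ℕ) (hK : 2 ≤ K) (hKN : K ≤ N) (α ρ : ℝ)
    (hα0 : 0 ≤ α) (hα1 : α ≤ 1) (hρ0 : 0 < ρ) (hρ1 : ρ ≤ 1)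
    (a : ℕ) (ha : 1 ≤ a) (haK : a + 1 ≤ K)
    (hqa : q K N ρ α a ≤ 1) (hqb : 1 < q K N ρ α (a + 1)) :
    (((a : ℝ) + 1) / ((a : ℝ) + 2)) * (1 / q K N ρ α (a + 1)) ≤
        objF K (pInter K N ρ α a (a + 1)) ↔ sigma a ≤ α := by
  have hK0 : 0 < K := by lia
  have hscale : 0 < (N : ℝ) / K * ρ := by
    have hN : 0 < N := by lia
    positivity
  rw [objF_pInter K N ρ α (Nat.ne_of_lt a.lt_succ_self) (Finset.mem_Icc.2 ⟨ha, by lia⟩)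
    (Finset.mem_Icc.2 ⟨by lia, haK⟩)]
  have hcast : ((a + 1 : ℕ) : ℝ) / (((a + 1 : ℕ) : ℝ) + 1) = ((a : ℝ) + 1) / ((a : ℝ) + 2) := by
    push_cast
    ring
  rw [hcast, corner_le_intersection_iff hqa hqb, sigma_le_iff ha, q_eq_add hK0, q_eq_add hK0,
    hcast, ← mul_le_mul_iff_right₀ (b := ((a : ℝ) + 1) / ((a : ℝ) + 2) * (a : ℝ) ^ α) hscale]
  push_cast
  constructor <;> intro h <;> linarith
end

section
/- (Corollary: optimality of uncoded delivery) Suppose α ≤ σ_{K−1} = 1 + log(K/(K+1))/log(K/(K−1)). Then for every ρ ∈ [0,1] there exists an optimal solution of the caching LP supported only on coordinate K; namely, y* with y*_K = min(1, 1/q_K) and y*_t = 0 for all t < K is optimal, so uncoded delivery (caching type t = K) is optimal regardless of ρ. -/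
open Finset

/-- The derivative of `x ↦ log (x + 1) + (α - 1) * log x` on the positive reals. -/
lemma hasDerivAt_log_add_one_add_mul_log (α : ℝ) {x : ℝ} (hx : 0 < x) :
    HasDerivAt (fun x : ℝ => Real.log (x + 1) + (α - 1) * Real.log x)
      ((α * (x + 1) - 1) / (x * (x + 1))) x := by
  refine ((((hasDerivAt_id' x).add_const 1).log (by positivity)).add
    ((Real.hasDerivAt_log hx.ne').const_mul (α - 1))).congr_deriv ?_
  field_simp
  ring

/-- If `log (x + 1) + (α - 1) * log x` does not increase from `b` to `c`, its value at `c` is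
at most its value at any `a ≤ b`. -/
lemma log_add_one_add_mul_log_le_of_le {α a b c : ℝ} (hα : 0 ≤ α) (ha : 0 < a) (hab : a ≤ b)
    (hbc : b < c)
    (h : Real.log (c + 1) + (α - 1) * Real.log c ≤ Real.log (b + 1) + (α - 1) * Real.log b) :
    Real.log (c + 1) + (α - 1) * Real.log c ≤ Real.log (a + 1) + (α - 1) * Real.log a := by
  rcases hab.eq_or_lt with rfl | hab
  · exact h
  have mvt : ∀ u v : ℝ, 0 < u → u < v → ∃ x ∈ Set.Ioo u v,
      (α * (x + 1) - 1) / (x * (x + 1)) =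
        ((Real.log (v + 1) + (α - 1) * Real.log v) -
          (Real.log (u + 1) + (α - 1) * Real.log u)) / (v - u) := fun u v hu huv =>
    exists_hasDerivAt_eq_slope (fun x : ℝ => Real.log (x + 1) + (α - 1) * Real.log x) _ huv
      (fun x hx => (hasDerivAt_log_add_one_add_mul_log α
        (hu.trans_le hx.1)).continuousAt.continuousWithinAt)
      (fun x hx => hasDerivAt_log_add_one_add_mul_log α (hu.trans hx.1))
  have hb := ha.trans hab
  obtain ⟨x, hx, hxs⟩ := mvt b c hb hbc
  obtain ⟨y, hy, hys⟩ := mvt a b ha hab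
  have hx0 : 0 < x := hb.trans hx.1
  have hy0 : 0 < y := ha.trans hy.1
  have hxn : α * (x + 1) - 1 ≤ 0 := by
    by_contra! hneg
    have hpos : 0 < (α * (x + 1) - 1) / (x * (x + 1)) := by positivity
    rw [hxs] at hpos
    exact absurd hpos (not_lt.2 (div_nonpos_of_nonpos_of_nonneg (by linarith) (by linarith)))
  have hyn : α * (y + 1) - 1 ≤ 0 := by
    have := mul_le_mul_of_nonneg_left (hy.2.trans hx.1).le hα
    linarith
  have hle := div_nonpos_of_nonpos_of_nonneg hyn (by positivity : 0 ≤ y * (y + 1))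
  rw [hys, div_le_iff₀ (by linarith), zero_mul] at hle
  linarith

lemma sigma_sub_one {K : ℕ} (hK : 2 ≤ K) :
    sigma (K - 1) = 1 + Real.log ((K : ℝ) / ((K : ℝ) + 1)) /
      Real.log ((K : ℝ) / ((K : ℝ) - 1)) := by
  have h : ((K - 1 : ℕ) : ℝ) = (K : ℝ) - 1 := by
    rw [Nat.cast_sub (by omega), Nat.cast_one]
  rw [sigma, h]
  ring_nf

/-- Below the threshold `sigma (K - 1)`, the ratio of `t ^ α` to `t / (t + 1)` is smallest
at `t = K`. -/
lemma div_mul_rpow_le {K t : ℕ} {α : ℝ} (hK : 2 ≤ K) (hα0 : 0 ≤ α) (hα : α ≤ sigma (K - 1))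
    (ht1 : 1 ≤ t) (htK : t ≤ K) :
    (t : ℝ) / (t + 1) * (K : ℝ) ^ α ≤ (K : ℝ) / (K + 1) * (t : ℝ) ^ α := by
  rcases htK.eq_or_lt with rfl | htK
  · exact le_rfl
  have hK2 : (2 : ℝ) ≤ K := by exact_mod_cast hK
  have ht : (1 : ℝ) ≤ t := by exact_mod_cast ht1
  have htK' : (t : ℝ) + 1 ≤ K := by exact_mod_cast htK
  have hK0 : (0 : ℝ) < K := by linarith
  have ht0 : (0 : ℝ) < t := by linarith
  have hK1 : (0 : ℝ) < K - 1 := by linarith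
  have hstep : Real.log ((K : ℝ) + 1) + (α - 1) * Real.log K ≤
      Real.log ((K : ℝ) - 1 + 1) + (α - 1) * Real.log ((K : ℝ) - 1) := by
    rw [sigma_sub_one hK, ← sub_le_iff_le_add',
      le_div_iff₀ (Real.log_pos ((one_lt_div hK1).2 (by linarith))),
      Real.log_div hK0.ne' hK1.ne', Real.log_div hK0.ne' (by positivity)] at hα
    rw [sub_add_cancel]
    linarith
  have hlog := log_add_one_add_mul_log_le_of_le hα0 ht0 (b := (K : ℝ) - 1) (by linarith)
    (by linarith) hstep
  rw [← Real.log_le_log_iff (by positivity) (by positivity), Real.log_mul (by positivity)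
    (by positivity), Real.log_mul (by positivity) (by positivity), Real.log_div ht0.ne'
    (by positivity), Real.log_div hK0.ne' (by positivity), Real.log_rpow hK0, Real.log_rpow ht0]
  linarith

lemma q_eq {K N t : ℕ} (ρ α : ℝ) (hK : K ≠ 0) :
    q K N ρ α t = N * ρ / K * (t : ℝ) ^ α + (K + 1) / K * ((t : ℝ) / (t + 1)) := by
  have : (K : ℝ) ≠ 0 := by exact_mod_cast hK
  rw [q, cCost]
  field_simp

lemma q_pos {K N t : ℕ} {ρ : ℝ} (α : ℝ) (hK : 0 < K) (ht : 0 < t) (hρ : 0 ≤ ρ) :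
    0 < q K N ρ α t := by
  have : (0 : ℝ) < K := by exact_mod_cast hK
  have : (0 : ℝ) < t := by exact_mod_cast ht
  rw [q_eq ρ α hK.ne']
  positivity

lemma div_mul_q_le {K N t : ℕ} {ρ α : ℝ} (hK : 2 ≤ K) (hα0 : 0 ≤ α) (hρ : 0 ≤ ρ)
    (hα : α ≤ sigma (K - 1)) (ht1 : 1 ≤ t) (htK : t ≤ K) :
    (t : ℝ) / (t + 1) * q K N ρ α K ≤ (K : ℝ) / (K + 1) * q K N ρ α t := by
  have h := mul_le_mul_of_nonneg_left (div_mul_rpow_le hK hα0 hα ht1 htK)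
    (by positivity : (0 : ℝ) ≤ N * ρ / K)
  rw [q_eq ρ α (by omega), q_eq ρ α (by omega)]
  linarith

lemma sum_Icc_mul_ite {K : ℕ} (hK : 1 ≤ K) (w : ℕ → ℝ) (m : ℝ) :
    ∑ t ∈ Icc 1 K, w t * (if t = K then m else 0) = w K * m := by
  simp [hK]

theorem uncoded_delivery_optimal_for_small_alpha
    (K N : ℕ) (hK : 2 ≤ K) (hKN : K ≤ N) (α ρ : ℝ)
    (hα0 : 0 ≤ α) (hα1 : α ≤ 1) (hρ0 : 0 ≤ ρ) (hρ1 : ρ ≤ 1)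
    (hα : α ≤ sigma (K - 1)) :
    sigma (K - 1) = 1 + Real.log ((K : ℝ) / ((K : ℝ) + 1)) /
        Real.log ((K : ℝ) / ((K : ℝ) - 1)) ∧
    Feasible K N ρ α (fun t => if t = K then min 1 (1 / q K N ρ α K) else 0) ∧
    (∀ z : ℕ → ℝ, Feasible K N ρ α z →
      objF K z ≤ objF K (fun t => if t = K then min 1 (1 / q K N ρ α K) else 0)) := by
  have hK1 : 1 ≤ K := by omega
  have hq : 0 < q K N ρ α K := q_pos α hK1 hK1 hρ0
  refine ⟨sigma_sub_one hK, ⟨?_, ?_, ?_⟩, ?_⟩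
  · rw [sum_Icc_mul_ite hK1]
    calc q K N ρ α K * min 1 (1 / q K N ρ α K) ≤ q K N ρ α K * (1 / q K N ρ α K) :=
          mul_le_mul_of_nonneg_left (min_le_right _ _) hq.le
      _ = 1 := mul_one_div_cancel hq.ne'
  · simp [hK1]
  · intro t _
    dsimp only
    split_ifs
    · positivity
    · exact le_rfl
  · rintro z ⟨hz1, hz2, hz0⟩
    have hw : (0 : ℝ) ≤ (K : ℝ) / (K + 1) := by positivity
    rw [objF, objF, sum_Icc_mul_ite hK1 (fun t => (t : ℝ) / (t + 1)), mul_min_of_nonneg _ _ hw]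
    refine le_min ?_ ?_
    · calc ∑ t ∈ Icc 1 K, (t : ℝ) / (t + 1) * z t
          ≤ ∑ t ∈ Icc 1 K, (K : ℝ) / (K + 1) * z t := by
            refine sum_le_sum fun t ht => mul_le_mul_of_nonneg_right ?_ (hz0 t ht)
            have htK : (t : ℝ) ≤ K := by exact_mod_cast (mem_Icc.1 ht).2
            rw [div_le_div_iff₀ (by positivity) (by positivity)]
            linarith
        _ ≤ (K : ℝ) / (K + 1) * 1 := by
            rw [← mul_sum]
            exact mul_le_mul_of_nonneg_left hz2 hw
    · rw [mul_one_div, le_div_iff₀ hq]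
      calc (∑ t ∈ Icc 1 K, (t : ℝ) / (t + 1) * z t) * q K N ρ α K
          ≤ ∑ t ∈ Icc 1 K, (K : ℝ) / (K + 1) * (q K N ρ α t * z t) := by
            rw [sum_mul]
            refine sum_le_sum fun t ht => ?_
            obtain ⟨ht1, htK⟩ := mem_Icc.1 ht
            have h := mul_le_mul_of_nonneg_right
              (div_mul_q_le (N := N) hK hα0 hρ0 hα ht1 htK) (hz0 t ht)
            linarith
        _ ≤ (K : ℝ) / (K + 1) := by
            rw [← mul_sum]
            exact mul_le_of_le_one_right hw hz1
end
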